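/- Let X ⊆ {0,1}^ℕ be a binary one-directional subshift. Then W(X) equals the subshift of {A,B}^ℕ consisting of all configurations containing at most one occurrence of the letter B (the subshift with language the factors of A*BA*) if and only if |B_n(X)| = n + 1 for all n ∈ ℕ. -/

import Mathlib

/-!
Word games (Salo–Törmä, "Playing with Subshifts").
The players' alphabet is `Bool`: player `A` is `false`, player `B` is `true`
(so that the order `A < B` is the order `false < true` on `Bool`).
-/

/-- Auxiliary function for the play of a finite ordered word game: the word built so far
is accumulated in the second argument, and at each step the player indicated by the
turn order picks the next letter as a function of the word built so far. -/
def playAux {S : Type*} (sA sB : List S → S) : List Bool → List S → List S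
  | [], w => w
  | b :: rest, w => playAux sA sB rest (w ++ [(if b then sB else sA) w])

/-- The play of the finite ordered word game with turn order `a`,
where `A` uses strategy `sA` and `B` uses strategy `sB`. -/
def play {S : Type*} (sA sB : List S → S) (a : List Bool) : List S :=
  playAux sA sB a []

/-- The winning set `W(X)` of a target set `X` of finite words: the set of turn orders
for which `A` has a winning strategy. -/
def Wset {S : Type*} (X : Set (List S)) : Set (List Bool) :=
  { a | ∃ sA : List S → S, ∀ sB : List S → S, play sA sB a ∈ X }

/-- The prefix of length `n` of the play of the infinite ordered word game with
turn order `a : ℕ → Bool`. -/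
def playPref {S : Type*} (sA sB : List S → S) (a : ℕ → Bool) : ℕ → List S
  | 0 => []
  | n + 1 => playPref sA sB a n ++ [(if a n then sB else sA) (playPref sA sB a n)]

/-- The play of the infinite ordered word game: coordinate `i` is chosen by the player
`a i` as a function of the word `x_0 ⋯ x_{i-1}` built so far. -/
def playInf {S : Type*} (sA sB : List S → S) (a : ℕ → Bool) : ℕ → S :=
  fun i => (if a i then sB else sA) (playPref sA sB a i)

/-- The winning shift `W(X)` of a target set `X ⊆ S^ℕ`: the set of turn orders for
which `A` has a winning strategy in the infinite game. -/
def WShift {S : Type*} (X : Set (ℕ → S)) : Set (ℕ → Bool) :=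
  { a | ∃ sA : List S → S, ∀ sB : List S → S, playInf sA sB a ∈ X }

/-- The shift map on one-directional configurations. -/
def shiftN {S : Type*} (x : ℕ → S) : ℕ → S := fun i => x (i + 1)

/-- The language `B(X)` of a set of one-directional configurations: all finite words
occurring as factors of its elements. -/
def langN {S : Type*} (X : Set (ℕ → S)) : Set (List S) :=
  { w | ∃ x ∈ X, ∃ i : ℕ, w = List.ofFn fun j : Fin w.length => x (i + j.val) }

/-!
The number of words of length `n` in a language `L` equals the number of turn orders of length `n`
winning for `L`: conditioning on the first letter, a turn order `A a` wins for `L` iff `a` wins for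
one of the two residual languages `0⁻¹L` and `1⁻¹L`, and `B a` wins iff `a` wins for both, so the
claim follows by induction from `|U ∪ V| + |U ∩ V| = |U| + |V|`.

Let `V` be the language of winning turn orders for the prefixes of points of `X`. By compactness
`W(X)` and `V` determine each other, and `V` has as many words of each length as `X` has prefixes.
The language `V` is closed under prefixes, under appending `A`, and under replacing `B` by `A`. If
it has `n + 1` words of each length `n`, then not every word of length `n + 1` in `V` ends in `A`,
so some `w B` with `|w| = n` lies in `V`, hence so do `A^n B` and all `A^n B A^m`; by counting
there is nothing else.
-/

section Plays

variable {S : Type*}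

theorem playAux_append (sA sB : List S → S) (a b : List Bool) (w : List S) :
    playAux sA sB (a ++ b) w = playAux sA sB b (playAux sA sB a w) := by
  induction a generalizing w with
  | nil => rfl
  | cons _ _ ih => exact ih _

theorem play_concat (sA sB : List S → S) (a : List Bool) (p : Bool) :
    play sA sB (a ++ [p]) = play sA sB a ++ [(if p then sB else sA) (play sA sB a)] :=
  playAux_append sA sB a [p] []

theorem playAux_cons (sA sB : List S → S) (a : List Bool) (c : S) (w : List S) :
    playAux sA sB a (c :: w) =
      c :: playAux (fun u => sA (c :: u)) (fun u => sB (c :: u)) a w := by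
  induction a generalizing w with
  | nil => rfl
  | cons p a ih => cases p <;> exact ih _

theorem play_cons_false (sA sB : List S → S) (a : List Bool) :
    play sA sB (false :: a) =
      sA [] :: play (fun u => sA (sA [] :: u)) (fun u => sB (sA [] :: u)) a :=
  playAux_cons sA sB a (sA []) []

theorem play_cons_true (sA sB : List S → S) (a : List Bool) :
    play sA sB (true :: a) =
      sB [] :: play (fun u => sA (sB [] :: u)) (fun u => sB (sB [] :: u)) a :=
  playAux_cons sA sB a (sB []) []

theorem play_prefix_play (sA sB : List S → S) {a b : List Bool} (h : a <+: b) :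
    play sA sB a <+: play sA sB b := by
  obtain ⟨t, rfl⟩ := h
  induction t using List.reverseRecOn with
  | nil => simp only [List.append_nil, List.prefix_refl]
  | append_singleton t p ih =>
    rw [← List.append_assoc, play_concat]
    exact ih.trans (List.prefix_append _ _)

/-- The strategy that opens with `c` and, once the first letter of the word is `d`, follows `s d`
on the remaining letters. -/
def openingStrategy (c : S) (s : S → List S → S) : List S → S
  | [] => c
  | d :: w => s d w

end Plays

section WinningSets

variable {S : Type*}

theorem nil_mem_Wset [Nonempty S] {L : Set (List S)} : [] ∈ Wset L ↔ [] ∈ L :=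
  ⟨fun ⟨sA, h⟩ => h sA, fun h => ⟨fun _ => Classical.arbitrary S, fun _ => h⟩⟩

theorem cons_false_mem_Wset {L : Set (List S)} {a : List Bool} :
    false :: a ∈ Wset L ↔ ∃ c, a ∈ Wset (List.cons c ⁻¹' L) := by
  constructor
  · rintro ⟨sA, h⟩
    refine ⟨sA [], fun w => sA (sA [] :: w), fun sB => ?_⟩
    have := h (openingStrategy (sA []) fun _ => sB)
    rwa [play_cons_false] at this
  · rintro ⟨c, sA, h⟩
    refine ⟨openingStrategy c fun _ => sA, fun sB => ?_⟩
    rw [play_cons_false]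
    exact h fun w => sB (c :: w)

theorem cons_true_mem_Wset [Nonempty S] {L : Set (List S)} {a : List Bool} :
    true :: a ∈ Wset L ↔ ∀ c, a ∈ Wset (List.cons c ⁻¹' L) := by
  constructor
  · rintro ⟨sA, h⟩ c
    refine ⟨fun w => sA (c :: w), fun sB => ?_⟩
    have := h (openingStrategy c fun _ => sB)
    rwa [play_cons_true] at this
  · intro h
    choose sA hsA using h
    refine ⟨openingStrategy (Classical.arbitrary S) sA, fun sB => ?_⟩
    rw [play_cons_true]
    exact hsA (sB []) fun w => sB (sB [] :: w)

theorem mem_Wset_of_prefix {L : Set (List S)} (hL : ∀ u v, u <+: v → v ∈ L → u ∈ L)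
    {a b : List Bool} (hab : a <+: b) (hb : b ∈ Wset L) : a ∈ Wset L := by
  obtain ⟨sA, h⟩ := hb
  exact ⟨sA, fun sB => hL _ _ (play_prefix_play sA sB hab) (h sB)⟩

theorem append_false_mem_Wset [Nonempty S] {L : Set (List S)} {a : List Bool}
    (hL : ∀ w ∈ L, ∃ c, w ++ [c] ∈ L) (ha : a ∈ Wset L) : a ++ [false] ∈ Wset L := by
  have residual (c : S) : ∀ w ∈ List.cons c ⁻¹' L, ∃ d, w ++ [d] ∈ List.cons c ⁻¹' L :=
    fun w hw => hL (c :: w) hw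
  induction a generalizing L with
  | nil =>
    obtain ⟨c, hc⟩ := hL [] (nil_mem_Wset.1 ha)
    exact cons_false_mem_Wset.2 ⟨c, nil_mem_Wset.2 hc⟩
  | cons p a ih =>
    cases p with
    | false =>
      obtain ⟨c, hc⟩ := cons_false_mem_Wset.1 ha
      exact cons_false_mem_Wset.2 ⟨c, ih (residual c) hc fun d w => residual c (d :: w)⟩
    | true =>
      exact cons_true_mem_Wset.2 fun c =>
        ih (residual c) (cons_true_mem_Wset.1 ha c) fun d w => residual c (d :: w)

theorem mem_Wset_of_le [Nonempty S] {L : Set (List S)} {a b : List Bool}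
    (hab : List.Forall₂ (· ≤ ·) a b) (hb : b ∈ Wset L) : a ∈ Wset L := by
  induction hab generalizing L with
  | nil => exact hb
  | @cons p q a b hpq _ ih =>
    match p, q with
    | false, false =>
      obtain ⟨c, hc⟩ := cons_false_mem_Wset.1 hb
      exact cons_false_mem_Wset.2 ⟨c, ih hc⟩
    | false, true =>
      exact cons_false_mem_Wset.2 ⟨Classical.arbitrary S, ih (cons_true_mem_Wset.1 hb _)⟩
    | true, true =>
      exact cons_true_mem_Wset.2 fun c => ih (cons_true_mem_Wset.1 hb c)

end WinningSets

section Complexity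

variable {S : Type*}

/-- The complexity function of a language: the number of its words of length `n`, or the junk
value `0` if there are infinitely many. -/
noncomputable def wordComplexity (L : Set (List S)) (n : ℕ) : ℕ :=
  Set.ncard {w | w ∈ L ∧ w.length = n}

theorem finite_words [Finite S] (L : Set (List S)) (n : ℕ) :
    {w | w ∈ L ∧ w.length = n}.Finite :=
  (List.finite_length_eq S n).subset fun _ hw => hw.2

theorem wordComplexity_succ [Fintype S] (L : Set (List S)) (n : ℕ) :
    wordComplexity L (n + 1) = ∑ c, wordComplexity (List.cons c ⁻¹' L) n := by
  have split : {w | w ∈ L ∧ w.length = n + 1} =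
      ⋃ c, List.cons c '' {w | w ∈ List.cons c ⁻¹' L ∧ w.length = n} := by
    ext w
    cases w with
    | nil => simp
    | cons c w => simp
  have disjoint : Pairwise (Function.onFun Disjoint fun c =>
      List.cons c '' {w | w ∈ List.cons c ⁻¹' L ∧ w.length = n}) := by
    intro c d hcd
    rw [Function.onFun, Set.disjoint_left]
    rintro _ ⟨u, _, rfl⟩ ⟨v, _, h⟩
    exact hcd (List.cons_eq_cons.1 h).1.symm
  rw [wordComplexity, split,
    Set.ncard_iUnion_of_finite (fun c => (finite_words _ n).image _) disjoint,
    finsum_eq_sum_of_fintype]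
  exact Finset.sum_congr rfl fun c _ => Set.ncard_image_of_injective _ (List.cons_injective)

theorem wordComplexity_bool_succ (L : Set (List Bool)) (n : ℕ) :
    wordComplexity L (n + 1) =
      wordComplexity (List.cons false ⁻¹' L) n + wordComplexity (List.cons true ⁻¹' L) n := by
  rw [wordComplexity_succ, Fintype.sum_bool, add_comm]

theorem wordComplexity_union_add_inter [Finite S] (L M : Set (List S)) (n : ℕ) :
    wordComplexity (L ∪ M) n + wordComplexity (L ∩ M) n =
      wordComplexity L n + wordComplexity M n := by
  have hunion : {w | w ∈ L ∪ M ∧ w.length = n} =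
      {w | w ∈ L ∧ w.length = n} ∪ {w | w ∈ M ∧ w.length = n} :=
    Set.ext fun _ => or_and_right
  have hinter : {w | w ∈ L ∩ M ∧ w.length = n} =
      {w | w ∈ L ∧ w.length = n} ∩ {w | w ∈ M ∧ w.length = n} :=
    Set.ext fun _ => and_and_right
  rw [wordComplexity, wordComplexity, hunion, hinter,
    Set.ncard_union_add_ncard_inter _ _ (finite_words L n) (finite_words M n)]
  rfl

theorem wordComplexity_Wset (L : Set (List Bool)) (n : ℕ) :
    wordComplexity (Wset L) n = wordComplexity L n := by
  induction n generalizing L with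
  | zero =>
    refine congrArg Set.ncard (Set.ext fun w => and_congr_left fun hw => ?_)
    rw [List.length_eq_zero_iff.1 hw, nil_mem_Wset]
  | succ n ih =>
    have hA : List.cons false ⁻¹' Wset L =
        Wset (List.cons false ⁻¹' L) ∪ Wset (List.cons true ⁻¹' L) := by
      ext a
      exact cons_false_mem_Wset.trans Bool.exists_bool
    have hB : List.cons true ⁻¹' Wset L =
        Wset (List.cons false ⁻¹' L) ∩ Wset (List.cons true ⁻¹' L) := by
      ext a
      exact cons_true_mem_Wset.trans Bool.forall_bool
    rw [wordComplexity_bool_succ, hA, hB, wordComplexity_union_add_inter, ih, ih,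
      wordComplexity_bool_succ L]

end Complexity

section InitialWords

variable {S : Type*}

/-- The prefix of length `n` of a configuration. -/
def initialWord (x : ℕ → S) (n : ℕ) : List S := List.ofFn fun i : Fin n => x i

/-- The language of all finite prefixes of elements of `X`. -/
def initialWords (X : Set (ℕ → S)) : Set (List S) := {w | ∃ x ∈ X, ∃ n, initialWord x n = w}

/-- The configurations all of whose finite prefixes belong to `L`. -/
def limitSet (L : Set (List S)) : Set (ℕ → S) := {x | ∀ n, initialWord x n ∈ L}

@[simp]
theorem length_initialWord (x : ℕ → S) (n : ℕ) : (initialWord x n).length = n :=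
  List.length_ofFn

theorem initialWord_succ (x : ℕ → S) (n : ℕ) :
    initialWord x (n + 1) = initialWord x n ++ [x n] :=
  List.ofFn_succ_last

theorem initialWord_eq_iff {x y : ℕ → S} {n : ℕ} :
    initialWord x n = initialWord y n ↔ ∀ i < n, x i = y i := by
  simp [initialWord, List.ofFn_inj, funext_iff, Fin.forall_iff]

theorem initialWord_prefix_of_le (x : ℕ → S) {m n : ℕ} (h : m ≤ n) :
    initialWord x m <+: initialWord x n := by
  induction n, h using Nat.le_induction with
  | base => exact List.prefix_refl _
  | succ n _ ih =>
    rw [initialWord_succ]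
    exact ih.trans (List.prefix_append _ _)

theorem eq_initialWord_of_prefix {x : ℕ → S} {n : ℕ} {w : List S} (h : w <+: initialWord x n) :
    w = initialWord x w.length := by
  have hle : w.length ≤ n := by simpa using h.length_le
  exact (List.prefix_of_prefix_length_le h (initialWord_prefix_of_le x hle)
    (by simp)).eq_of_length (by simp)

theorem mem_initialWords_of_prefix {X : Set (ℕ → S)} (u v : List S) (h : u <+: v)
    (hv : v ∈ initialWords X) : u ∈ initialWords X := by
  obtain ⟨x, hx, n, rfl⟩ := hv
  exact ⟨x, hx, _, (eq_initialWord_of_prefix h).symm⟩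

theorem exists_append_mem_initialWords {X : Set (ℕ → S)} (w : List S) (hw : w ∈ initialWords X) :
    ∃ c, w ++ [c] ∈ initialWords X := by
  obtain ⟨x, hx, n, rfl⟩ := hw
  exact ⟨x n, x, hx, n + 1, initialWord_succ x n⟩

theorem limitSet_initialWords [TopologicalSpace S] [DiscreteTopology S] (X : Set (ℕ → S)) :
    limitSet (initialWords X) = closure X := by
  ext x
  rw [(PiNat.isTopologicalBasis_cylinders fun _ : ℕ => S).mem_closure_iff]
  constructor
  · rintro hx _ ⟨y, n, rfl⟩ hxy
    obtain ⟨z, hz, m, h⟩ := hx n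
    obtain rfl : m = n := by simpa using congrArg List.length h
    rw [PiNat.mem_cylinder_iff_eq.1 hxy |>.symm]
    exact ⟨z, PiNat.mem_cylinder_iff.2 (initialWord_eq_iff.1 h), hz⟩
  · intro hx n
    obtain ⟨y, hy, hyX⟩ := hx _ ⟨x, n, rfl⟩ (PiNat.self_mem_cylinder x n)
    exact ⟨y, hyX, n, initialWord_eq_iff.2 (PiNat.mem_cylinder_iff.1 hy)⟩

theorem initialWords_limitSet {L : Set (List S)} (hpre : ∀ u v, u <+: v → v ∈ L → u ∈ L) {c : S}
    (hc : ∀ w ∈ L, w ++ [c] ∈ L) : initialWords (limitSet L) = L := by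
  refine Set.Subset.antisymm (fun _ ⟨_, hx, n, h⟩ => h ▸ hx n) fun w hw => ?_
  let x : ℕ → S := fun i => w.getD i c
  have hxw : initialWord x w.length = w := by
    simp [initialWord, x]
  refine ⟨x, fun n => ?_, w.length, hxw⟩
  rcases le_total n w.length with hn | hn
  · exact hpre _ _ (initialWord_prefix_of_le x hn) (hxw.symm ▸ hw)
  · induction n, hn using Nat.le_induction with
    | base => exact hxw.symm ▸ hw
    | succ n hn ih =>
      have hxn : x n = c := List.getD_eq_default _ _ hn
      rw [initialWord_succ, hxn]
      exact hc _ ih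

theorem iterate_shiftN_apply (x : ℕ → S) (i j : ℕ) : shiftN^[i] x j = x (i + j) := by
  induction i generalizing x with
  | zero => simp only [Function.iterate_zero_apply, Nat.zero_add]
  | succ i ih => rw [Function.iterate_succ_apply, ih, shiftN, Nat.add_right_comm]

theorem langN_eq_initialWords {X : Set (ℕ → S)} (hX : ∀ x ∈ X, shiftN x ∈ X) :
    langN X = initialWords X := by
  ext w
  constructor
  · rintro ⟨x, hx, i, hw⟩
    have hxi : shiftN^[i] x ∈ X := Set.MapsTo.iterate hX i hx
    refine ⟨_, hxi, w.length, ?_⟩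
    simpa only [initialWord, iterate_shiftN_apply] using hw.symm
  · rintro ⟨x, hx, n, rfl⟩
    exact ⟨x, hx, 0, List.ext_getElem (by simp) (by simp [initialWord])⟩

end InitialWords

section WinningShifts

variable {S : Type*}

theorem play_initialWord (sA sB : List S → S) (a : ℕ → Bool) (n : ℕ) :
    play sA sB (initialWord a n) = initialWord (playInf sA sB a) n := by
  have hpref (n : ℕ) : play sA sB (initialWord a n) = playPref sA sB a n := by
    induction n with
    | zero => rfl
    | succ n ih => rw [initialWord_succ, play_concat, ih, playPref]
  induction n with
  | zero => rfl
  | succ n ih => rw [initialWord_succ, play_concat, initialWord_succ, ← ih, hpref, playInf]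

variable [TopologicalSpace S] [DiscreteTopology S]

theorem isLocallyConstant_play (sB : List S → S) (a : List Bool) :
    IsLocallyConstant fun sA => play sA sB a := by
  rw [IsLocallyConstant.iff_eventually_eq]
  intro sA
  induction a using List.reverseRecOn with
  | nil => exact Filter.Eventually.of_forall fun _ => rfl
  | append_singleton a p ih =>
    have hmove : ∀ᶠ s in nhds sA, s (play sA sB a) = sA (play sA sB a) :=
      (IsLocallyConstant.iff_continuous _).2 (continuous_apply (play sA sB a))
        |>.eventually_eq sA
    filter_upwards [ih, hmove] with s hplay hs
    rw [play_concat, play_concat, hplay]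
    cases p
    · simp [hs]
    · rfl

theorem isClosed_setOf_forall_play_mem (L : Set (List S)) (a : List Bool) :
    IsClosed {sA | ∀ sB, play sA sB a ∈ L} := by
  rw [Set.ofPred_forall]
  exact isClosed_iInter fun sB => isOpen_compl_iff.1 (isLocallyConstant_play sB a Lᶜ)

theorem WShift_eq_limitSet_Wset [Finite S] {X : Set (ℕ → S)} (hX : IsClosed X) :
    WShift X = limitSet (Wset (initialWords X)) := by
  have mem_iff (x : ℕ → S) : x ∈ X ↔ ∀ n, initialWord x n ∈ initialWords X :=
    Set.ext_iff.1 (hX.closure_eq.symm.trans (limitSet_initialWords X).symm) x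
  ext a
  let K (n : ℕ) : Set (List S → S) :=
    {sA | ∀ sB, play sA sB (initialWord a n) ∈ initialWords X}
  have mem_WShift : a ∈ WShift X ↔ (⋂ n, K n).Nonempty := by
    simp only [K, play_initialWord, WShift, mem_iff, Set.mem_ofPred_eq, Set.Nonempty,
      Set.mem_iInter]
    exact exists_congr fun sA => forall_comm
  have K_closed (n : ℕ) : IsClosed (K n) := isClosed_setOf_forall_play_mem _ _
  have K_anti (n : ℕ) : K (n + 1) ⊆ K n := fun sA h sB =>
    mem_initialWords_of_prefix _ _
      (play_prefix_play sA sB (initialWord_prefix_of_le a n.le_succ)) (h sB)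
  rw [mem_WShift]
  exact ⟨fun ⟨sA, h⟩ n => ⟨sA, Set.mem_iInter.1 h n⟩, fun h =>
    IsCompact.nonempty_iInter_of_sequence_nonempty_isCompact_isClosed K K_anti h
      (K_closed 0).isCompact K_closed⟩

end WinningShifts

section AtMostOneB

/-- The language of turn orders in which `B` plays at most once. -/
def atMostOneB : Set (List Bool) := {a | a.count true ≤ 1}

theorem limitSet_atMostOneB :
    limitSet atMostOneB = {a | ∀ i j : ℕ, a i = true → a j = true → i = j} := by
  ext a
  have count_eq (n : ℕ) : (initialWord a n).count true = Nat.count (a · = true) n := by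
    induction n with
    | zero => rfl
    | succ n ih => simp [initialWord_succ, Nat.count_succ, ih, List.count_singleton]
  simp only [limitSet, atMostOneB, Set.mem_ofPred_eq, count_eq]
  constructor
  · intro h
    have count_eq_zero (i : ℕ) (hi : a i = true) : Nat.count (a · = true) i = 0 := by
      have := h (i + 1)
      rw [Nat.count_succ, if_pos hi] at this
      omega
    exact fun i j hi hj =>
      Nat.count_injective hi hj ((count_eq_zero i hi).trans (count_eq_zero j hj).symm)
  · intro h n
    rw [Nat.count_eq_card_filter_range, Finset.card_le_one]
    exact fun i hi j hj => h i j (Finset.mem_filter.1 hi).2 (Finset.mem_filter.1 hj).2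

theorem initialWords_limitSet_atMostOneB : initialWords (limitSet atMostOneB) = atMostOneB :=
  initialWords_limitSet (c := false) (fun _ _ h hv => (h.sublist.count_le true).trans hv)
    fun w hw => by simpa [atMostOneB] using hw

theorem count_true_eq_zero_iff {a : List Bool} :
    a.count true = 0 ↔ a = List.replicate a.length false := by
  simp [List.eq_replicate_iff, List.count_eq_zero]

theorem forall₂_replicate_false_le (a : List Bool) :
    List.Forall₂ (· ≤ ·) (List.replicate a.length false) a := by
  induction a with
  | nil => exact .nil
  | cons p a ih => exact .cons (Bool.false_le p) ih

theorem wordComplexity_atMostOneB (n : ℕ) : wordComplexity atMostOneB n = n + 1 := by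
  have noB (n : ℕ) : wordComplexity (List.cons true ⁻¹' atMostOneB) n = 1 := by
    rw [wordComplexity, Set.ncard_eq_one]
    refine ⟨List.replicate n false, Set.ext fun a => ?_⟩
    simp [atMostOneB, List.eq_replicate_iff, List.count_eq_zero, and_comm]
  induction n with
  | zero =>
    rw [wordComplexity, Set.ncard_eq_one]
    exact ⟨[], by ext; simp +contextual [atMostOneB]⟩
  | succ n ih =>
    have hA : List.cons false ⁻¹' atMostOneB = atMostOneB := by
      ext a
      simp [atMostOneB]
    rw [wordComplexity_bool_succ, hA, noB, ih]

/-- A language of turn orders is hereditary if it is closed under prefixes, under giving player `A`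
one more turn at the end, and under handing turns of player `B` over to player `A`. -/
structure IsHereditary (V : Set (List Bool)) : Prop where
  of_prefix : ∀ u v, u <+: v → v ∈ V → u ∈ V
  append_false : ∀ w ∈ V, w ++ [false] ∈ V
  of_le : ∀ u v, List.Forall₂ (· ≤ ·) u v → v ∈ V → u ∈ V

theorem isHereditary_Wset_initialWords {S : Type*} [Nonempty S] (X : Set (ℕ → S)) :
    IsHereditary (Wset (initialWords X)) where
  of_prefix _ _ := mem_Wset_of_prefix mem_initialWords_of_prefix
  append_false _ := append_false_mem_Wset exists_append_mem_initialWords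
  of_le _ _ := mem_Wset_of_le

namespace IsHereditary

variable {V : Set (List Bool)}

theorem limitSet_eq_limitSet_atMostOneB_iff (hV : IsHereditary V) :
    limitSet V = limitSet atMostOneB ↔ V = atMostOneB := by
  refine ⟨fun h => ?_, congrArg limitSet⟩
  rw [← initialWords_limitSet hV.of_prefix hV.append_false, h, initialWords_limitSet_atMostOneB]

theorem replicate_false_append_true_mem (hV : IsHereditary V) {n : ℕ}
    (h : wordComplexity V n < wordComplexity V (n + 1)) :
    List.replicate n false ++ [true] ∈ V := by
  obtain ⟨w, hw, hwB⟩ : ∃ w, w.length = n ∧ w ++ [true] ∈ V := by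
    by_contra! hB
    have hsub : {w | w ∈ V ∧ w.length = n + 1} ⊆ (· ++ [false]) '' {w | w ∈ V ∧ w.length = n} := by
      rintro w ⟨hw, hlen⟩
      obtain ⟨u, p, rfl⟩ : ∃ u p, w = u ++ [p] :=
        (List.eq_nil_or_concat' w).resolve_left (List.ne_nil_of_length_eq_add_one hlen)
      have hu : u.length = n := by simpa using hlen
      cases p with
      | false => exact ⟨u, ⟨hV.of_prefix _ _ (List.prefix_append _ _) hw, hu⟩, rfl⟩
      | true => exact absurd hw (hB u hu)
    exact h.not_ge <| (Set.ncard_le_ncard hsub ((finite_words V n).image _)).trans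
      (Set.ncard_image_le (finite_words V n))
  rw [← hw]
  exact hV.of_le _ _ (List.rel_append (forall₂_replicate_false_le w) (List.forall₂_refl _)) hwB

theorem atMostOneB_subset (hV : IsHereditary V) (hnil : [] ∈ V)
    (h : ∀ n, wordComplexity V n < wordComplexity V (n + 1)) : atMostOneB ⊆ V := by
  intro a ha
  induction a using List.reverseRecOn with
  | nil => exact hnil
  | append_singleton a p ih =>
    cases p with
    | false => exact hV.append_false a (ih (by simpa [atMostOneB] using ha))
    | true =>
      have hcount : a.count true = 0 := by simpa [atMostOneB] using ha
      rw [count_true_eq_zero_iff.1 hcount]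
      exact hV.replicate_false_append_true_mem (h _)

theorem eq_atMostOneB_iff (hV : IsHereditary V) :
    V = atMostOneB ↔ ∀ n, wordComplexity V n = n + 1 := by
  constructor
  · rintro rfl
    exact wordComplexity_atMostOneB
  · intro h
    have hnil : [] ∈ V := by
      obtain ⟨w, hw, hlen⟩ : {w | w ∈ V ∧ w.length = 0}.Nonempty :=
        Set.nonempty_of_ncard_ne_zero ((h 0).trans_ne one_ne_zero)
      rwa [List.length_eq_zero_iff.1 hlen] at hw
    have hsub : atMostOneB ⊆ V := hV.atMostOneB_subset hnil fun n => by rw [h, h]; omega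
    refine Set.Subset.antisymm (fun a ha => ?_) hsub
    have heq : {w | w ∈ atMostOneB ∧ w.length = a.length} = {w | w ∈ V ∧ w.length = a.length} :=
      Set.eq_of_subset_of_ncard_le (fun w hw => ⟨hsub hw.1, hw.2⟩)
        ((h _).trans (wordComplexity_atMostOneB _).symm).le (finite_words V _)
    exact (heq.ge ⟨ha, rfl⟩).1

end IsHereditary

end AtMostOneB

theorem winningShift_atMostOneB_iff_complexity_general (X : Set (ℕ → Bool)) (hX : IsClosed X) :
    WShift X = {a : ℕ → Bool | ∀ i j : ℕ, a i = true → a j = true → i = j} ↔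
      ∀ n : ℕ, wordComplexity (initialWords X) n = n + 1 := by
  have hV : IsHereditary (Wset (initialWords X)) := isHereditary_Wset_initialWords X
  rw [WShift_eq_limitSet_Wset hX, ← limitSet_atMostOneB, hV.limitSet_eq_limitSet_atMostOneB_iff,
    hV.eq_atMostOneB_iff]
  simp only [wordComplexity_Wset]

/-- A binary one-directional subshift `X ⊆ {0,1}^ℕ` has winning
shift equal to the set of configurations with at most one occurrence of `B` if and
only if `|B_n(X)| = n + 1` for all `n`. -/
theorem winningShift_atMostOneB_iff_complexity (X : Set (ℕ → Bool))
    (hXcl : IsClosed X) (hXsh : ∀ x ∈ X, shiftN x ∈ X) :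
    WShift X = { a : ℕ → Bool | ∀ i j : ℕ, a i = true → a j = true → i = j } ↔
      ∀ n : ℕ, Set.ncard { w | w ∈ langN X ∧ w.length = n } = n + 1 := by
  rw [langN_eq_initialWords hXsh]
  exact winningShift_atMostOneB_iff_complexity_general X hXcl
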